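/- The open interval (24√35/43, (457878845−1713407√87)/133663998) is a gap of the Markov spectrum: M ∩ (24√35/43, (457878845−1713407√87)/133663998) = ∅, while both endpoints 24√35/43 and (457878845−1713407√87)/133663998 belong to M. -/

import Mathlib

open Filter Set MeasureTheory
open scoped ENNReal

/-- Finite continued fraction `[a 0; a 1, ..., a n]`. -/
noncomputable def cfConv : (ℕ → ℝ) → ℕ → ℝ
  | a, 0 => a 0
  | a, n + 1 => a 0 + 1 / cfConv (fun i => a (i + 1)) n

/-- Value of the infinite continued fraction `[a 0; a 1, a 2, ...]`,
as the limit of its convergents. -/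
noncomputable def cfVal (a : ℕ → ℝ) : ℝ := limUnder atTop (cfConv a)

/-- `λ_k(α) = [α_k; α_{k+1}, ...] + [0; α_{k-1}, α_{k-2}, ...]`. -/
noncomputable def lambdaVal (α : ℤ → ℕ) (k : ℤ) : ℝ :=
  cfVal (fun n => (α (k + n) : ℝ)) +
  cfVal (fun n => if n = 0 then 0 else (α (k - n) : ℝ))

/-- The Markov value `m(α) = sup_{k ∈ ℤ} λ_k(α)`. -/
noncomputable def markovValue (α : ℤ → ℕ) : ℝ := ⨆ k : ℤ, lambdaVal α k

/-- The Markov spectrum. -/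
def markovSpectrum : Set ℝ :=
  { x | ∃ α : ℤ → ℕ, (∀ n, 0 < α n) ∧ BddAbove (range (lambdaVal α)) ∧
      markovValue α = x }

/-- The dimension function `d(t) = dim_H (M ∩ (-∞, t))`. -/
noncomputable def dimFun (t : ℝ) : ℝ≥0∞ := dimH (markovSpectrum ∩ Iio t)

/-! ### Convergence and the basic recursion -/

lemma one_le_cfConv {a : ℕ → ℝ} (ha : ∀ n, 1 ≤ a n) (n : ℕ) : 1 ≤ cfConv a n := by
  induction n generalizing a with
  | zero => exact ha 0
  | succ n ih =>
    have h := ih (a := fun i => a (i + 1)) (fun i => ha (i + 1))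
    have : 0 < 1 / cfConv (fun i => a (i + 1)) n := by positivity
    have := ha 0
    simp only [cfConv]
    linarith

lemma abs_cfConv_sub_le {a : ℕ → ℝ} (ha : ∀ n, 1 ≤ a n) (n m : ℕ) (hnm : n ≤ m) :
    |cfConv a n - cfConv a m| ≤ (1 / 2) ^ n := by
  induction n using Nat.twoStepInduction generalizing a m with
  | zero =>
    cases m with
    | zero => simp
    | succ m =>
      have h := one_le_cfConv (a := fun i => a (i + 1)) (fun i => ha (i + 1)) m
      simp only [cfConv, pow_zero, sub_add_cancel_left, abs_neg]
      rw [abs_of_pos (by positivity), div_le_one (by positivity)]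
      exact h
  | one =>
    obtain ⟨m, rfl⟩ := Nat.exists_eq_add_of_le' hnm
    cases m with
    | zero => simp
    | succ m =>
      have h := one_le_cfConv (a := fun i => a (i + 1 + 1)) (fun i => ha (i + 1 + 1)) m
      have h1 := ha 1
      simp only [cfConv, pow_one, zero_add]
      set x := cfConv (fun i => a (i + 1 + 1)) m
      have hx : 0 < x := by linarith
      have ha1 : 0 < a 1 := by linarith
      have e : a 0 + 1 / a 1 - (a 0 + 1 / (a 1 + 1 / x)) = 1 / (a 1 * (a 1 * x + 1)) := by
        field_simp
        ring
      rw [e, abs_of_pos (by positivity)]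
      apply one_div_le_one_div_of_le (by norm_num)
      nlinarith [mul_le_mul h1 h (by norm_num) ha1.le]
  | more n ih _ =>
    obtain ⟨m, rfl⟩ := Nat.exists_eq_add_of_le' (le_trans (by omega : 2 ≤ n + 2) hnm)
    have h := ih (a := fun i => a (i + 1 + 1)) (fun i => ha (i + 1 + 1)) m (by omega)
    have hx := one_le_cfConv (a := fun i => a (i + 1 + 1)) (fun i => ha (i + 1 + 1)) n
    have hy := one_le_cfConv (a := fun i => a (i + 1 + 1)) (fun i => ha (i + 1 + 1)) m
    have h1 := ha 1
    simp only [cfConv, zero_add]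
    set x := cfConv (fun i => a (i + 1 + 1)) n
    set y := cfConv (fun i => a (i + 1 + 1)) m
    have hx0 : 0 < x := by linarith
    have hy0 : 0 < y := by linarith
    have ha1 : 0 < a 1 := by linarith
    have e : a 0 + 1 / (a 1 + 1 / x) - (a 0 + 1 / (a 1 + 1 / y)) =
        (x - y) / ((a 1 * x + 1) * (a 1 * y + 1)) := by
      field_simp
      ring
    rw [e, abs_div, abs_of_pos (by positivity : 0 < (a 1 * x + 1) * (a 1 * y + 1)),
      div_le_iff₀ (by positivity)]
    have hX : 2 ≤ a 1 * x + 1 := by nlinarith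
    have hY : 2 ≤ a 1 * y + 1 := by nlinarith
    have h4 : 4 ≤ (a 1 * x + 1) * (a 1 * y + 1) := by nlinarith
    have hp : (0 : ℝ) < (1 / 2) ^ n := by positivity
    calc |x - y| ≤ (1 / 2) ^ n := h
      _ = (1 / 2) ^ (n + 2) * 4 := by ring
      _ ≤ _ := by gcongr

lemma tendsto_cfConv {a : ℕ → ℝ} (ha : ∀ n, 1 ≤ a n) :
    Tendsto (cfConv a) atTop (nhds (cfVal a)) := by
  refine CauchySeq.tendsto_limUnder (cauchySeq_of_le_tendsto_0' (fun n => (1 / 2 : ℝ) ^ n) ?_ ?_)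
  · intro n m h
    rw [Real.dist_eq]
    exact abs_cfConv_sub_le ha n m h
  · exact tendsto_pow_atTop_nhds_zero_of_lt_one (by norm_num) (by norm_num)

lemma one_le_cfVal {a : ℕ → ℝ} (ha : ∀ n, 1 ≤ a n) : 1 ≤ cfVal a :=
  ge_of_tendsto' (tendsto_cfConv ha) (one_le_cfConv ha)

lemma cfVal_succ {a : ℕ → ℝ} (ha : ∀ n, 1 ≤ a (n + 1)) :
    cfVal a = a 0 + 1 / cfVal (fun n => a (n + 1)) := by
  have h0 : cfVal (fun n => a (n + 1)) ≠ 0 := by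
    have := one_le_cfVal (a := fun n => a (n + 1)) ha
    positivity
  have h : Tendsto (fun n => cfConv a (n + 1)) atTop
      (nhds (a 0 + 1 / cfVal (fun n => a (n + 1)))) :=
    (tendsto_const_nhds.div (tendsto_cfConv (a := fun n => a (n + 1)) ha) h0).const_add (a 0)
  exact ((tendsto_add_atTop_iff_nat 1).1 h).limUnder_eq

/-- The continued fraction with natural partial quotients `f 0, f 1, ...`. -/
noncomputable def natCf (f : ℕ → ℕ) : ℝ := cfVal (fun n => (f n : ℝ))

section natCf

variable {f g : ℕ → ℕ}

lemma natCf_succ (hf : ∀ n, 0 < f n) : natCf f = f 0 + 1 / natCf (fun n => f (n + 1)) :=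
  cfVal_succ (a := fun n => (f n : ℝ)) (fun n => by exact_mod_cast hf (n + 1))

lemma one_le_natCf (hf : ∀ n, 0 < f n) : 1 ≤ natCf f :=
  one_le_cfVal (fun n => by exact_mod_cast hf n)

lemma lt_natCf (hf : ∀ n, 0 < f n) : (f 0 : ℝ) < natCf f := by
  have h := one_le_natCf (f := fun n => f (n + 1)) (fun n => hf (n + 1))
  rw [natCf_succ hf]
  have : 0 < 1 / natCf (fun n => f (n + 1)) := by positivity
  linarith

lemma one_lt_natCf (hf : ∀ n, 0 < f n) : 1 < natCf f :=
  lt_of_le_of_lt (by exact_mod_cast hf 0) (lt_natCf hf)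

lemma natCf_lt (hf : ∀ n, 0 < f n) : natCf f < f 0 + 1 := by
  have h := one_lt_natCf (f := fun n => f (n + 1)) (fun n => hf (n + 1))
  rw [natCf_succ hf]
  have : 1 / natCf (fun n => f (n + 1)) < 1 := by
    rw [div_lt_one (by linarith)]
    exact h
  linarith

/-- Continued fractions are ordered by the parity of the first index where they differ. -/
lemma natCf_lt_natCf (hf : ∀ n, 0 < f n) (hg : ∀ n, 0 < g n) (n : ℕ)
    (heq : ∀ i < n, f i = g i) (heven : n % 2 = 0 → f n < g n) (hodd : n % 2 = 1 → g n < f n) :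
    natCf f < natCf g := by
  induction n generalizing f g with
  | zero =>
    have h : (f 0 : ℝ) + 1 ≤ g 0 := by exact_mod_cast heven rfl
    linarith [natCf_lt hf, lt_natCf hg]
  | succ n ih =>
    have h := ih (f := fun i => g (i + 1)) (g := fun i => f (i + 1)) (fun i => hg (i + 1))
      (fun i => hf (i + 1)) (fun i hi => (heq (i + 1) (by omega)).symm)
      (fun h => hodd (by omega)) (fun h => heven (by omega))
    have h1 := one_le_natCf (f := fun n => g (n + 1)) (fun n => hg (n + 1))
    rw [natCf_succ hf, natCf_succ hg, heq 0 (by omega)]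
    gcongr

end natCf

/-! ### Bounds from finitely many partial quotients -/

/-- `cfBound [d₀, ..., dₙ₋₁] x y` is `[d₀; ..., dₙ₋₁, x]` if `n` is even and
`[d₀; ..., dₙ₋₁, y]` if `n` is odd. -/
noncomputable def cfBound : List ℕ → ℝ → ℝ → ℝ
  | [], x, _ => x
  | d :: l, x, y => d + 1 / cfBound l y x

/-- The sequence `f` begins with the word `l`. -/
def StartsWith : List ℕ → (ℕ → ℕ) → Prop
  | [], _ => True
  | d :: l, f => f 0 = d ∧ StartsWith l (fun n => f (n + 1))

lemma cfBound_pos (l : List ℕ) {x y : ℝ} (hx : 0 < x) (hy : 0 < y) : 0 < cfBound l x y := by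
  induction l generalizing x y with
  | nil => exact hx
  | cons d l ih =>
    have := ih hy hx
    simp only [cfBound]
    positivity

lemma cfBound_le_natCf {l : List ℕ} {f : ℕ → ℕ} (hf : ∀ n, 0 < f n) (hl : StartsWith l f)
    {x y : ℝ} (hx0 : 0 < x) (hx : x ≤ natCf (fun n => f (n + l.length)))
    (hy : natCf (fun n => f (n + l.length)) ≤ y) :
    cfBound l x y ≤ natCf f ∧ natCf f ≤ cfBound l y x := by
  have hy0 : 0 < y := by linarith
  induction l generalizing f with
  | nil => exact ⟨hx, hy⟩
  | cons d l ih =>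
    obtain ⟨h1, h2⟩ := ih (f := fun n => f (n + 1)) (fun n => hf (n + 1)) hl.2
      (by simpa [add_assoc, add_comm 1] using hx) (by simpa [add_assoc, add_comm 1] using hy)
    have h3 := cfBound_pos l hx0 hy0
    have h4 := one_le_natCf (f := fun n => f (n + 1)) (fun n => hf (n + 1))
    rw [natCf_succ hf, hl.1]
    simp only [cfBound]
    constructor <;> gcongr

lemma natCf_eq_cfBound {l : List ℕ} {f : ℕ → ℕ} (hf : ∀ n, 0 < f n) (hl : StartsWith l f) :
    natCf f = cfBound l (natCf (fun n => f (n + l.length))) (natCf (fun n => f (n + l.length))) :=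
  have h0 := one_le_natCf (f := fun n => f (n + l.length)) (fun n => hf (n + l.length))
  have h := cfBound_le_natCf hf hl (by linarith) le_rfl le_rfl
  le_antisymm h.2 h.1

lemma natCf_mem_Icc {f : ℕ → ℕ} (hf : ∀ n, f n = 1 ∨ f n = 2) :
    15 / 11 ≤ natCf f ∧ natCf f ≤ 41 / 15 := by
  have step (x y : ℝ) (hx : 0 < x) (H : ∀ g : ℕ → ℕ, (∀ n, g n = 1 ∨ g n = 2) →
      x ≤ natCf g ∧ natCf g ≤ y) (g : ℕ → ℕ) (hg : ∀ n, g n = 1 ∨ g n = 2) :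
      1 + 1 / y ≤ natCf g ∧ natCf g ≤ 2 + 1 / x := by
    have hpos : ∀ n, 0 < g n := fun n => by have := hg n; omega
    obtain ⟨h1, h2⟩ := H (fun n => g (n + 1)) (fun n => hg (n + 1))
    rw [natCf_succ hpos]
    have h3 := one_div_le_one_div_of_le hx h1
    have h4 := one_div_le_one_div_of_le (by linarith) h2
    rcases hg 0 with h | h <;> rw [h] <;> push_cast <;> constructor <;> linarith
  have h1 := step 1 3 one_pos fun g hg => by
    have hpos : ∀ n, 0 < g n := fun n => by have := hg n; omega
    have h := natCf_lt hpos
    refine ⟨one_le_natCf hpos, ?_⟩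
    rcases hg 0 with h' | h' <;> rw [h'] at h <;> push_cast at h <;> linarith
  have h2 := step _ _ (by norm_num) h1
  have h3 := step _ _ (by norm_num) h2
  have h4 := step _ _ (by norm_num) h3
  have h5 := h4 f hf
  norm_num at h5 ⊢
  constructor <;> linarith

/-! ### Elementary properties of `lambdaVal` -/

section lambdaVal

variable {α : ℤ → ℕ}

lemma lambdaVal_eq (hα : ∀ n, 0 < α n) (k : ℤ) :
    lambdaVal α k = natCf (fun n => α (k + n)) + 1 / natCf (fun n => α (k - 1 - n)) := by
  unfold lambdaVal
  congr 1
  rw [cfVal_succ]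
  · simp only [natCf, if_true, zero_add, Nat.add_eq_zero_iff, one_ne_zero, and_false, if_false]
    congr 3
    funext n
    congr 2
    push_cast
    ring
  · intro n
    simp only [Nat.add_eq_zero_iff, one_ne_zero, and_false, if_false]
    exact_mod_cast hα _

lemma lambdaVal_eq' (hα : ∀ n, 0 < α n) (k : ℤ) :
    lambdaVal α k = natCf (fun n => α (k - n)) + 1 / natCf (fun n => α (k + 1 + n)) := by
  rw [lambdaVal_eq hα, natCf_succ (f := fun n => α (k + n)) (fun n => hα _),
    natCf_succ (f := fun n => α (k - n)) (fun n => hα _)]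
  have e1 : (fun n : ℕ => α (k + (n + 1 : ℕ))) = fun n : ℕ => α (k + 1 + n) := by
    funext n
    congr 1
    push_cast
    ring
  have e2 : (fun n : ℕ => α (k - (n + 1 : ℕ))) = fun n : ℕ => α (k - 1 - n) := by
    funext n
    congr 1
    push_cast
    ring
  rw [e1, e2]
  simp only [Nat.cast_zero, add_zero, sub_zero]
  ring

lemma lambdaVal_shift (c k : ℤ) : lambdaVal (fun n => α (n + c)) k = lambdaVal α (k + c) := by
  simp only [lambdaVal, add_right_comm k, sub_add_eq_add_sub]

lemma lambdaVal_neg (hα : ∀ n, 0 < α n) (k : ℤ) :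
    lambdaVal (fun n => α (-n)) k = lambdaVal α (-k) := by
  rw [lambdaVal_eq (fun n => hα (-n)), lambdaVal_eq' hα]
  congr 4
  · funext n
    congr 1
    ring
  · funext n
    congr 1
    ring

lemma cfBound_le_lambdaVal (hα : ∀ n, α n = 1 ∨ α n = 2) (k : ℤ) {l r : List ℕ}
    (hr : StartsWith r (fun n => α (k + n))) (hl : StartsWith l (fun n => α (k - 1 - n))) :
    cfBound r (15 / 11) (41 / 15) + 1 / cfBound l (41 / 15) (15 / 11) ≤ lambdaVal α k ∧
    lambdaVal α k ≤ cfBound r (41 / 15) (15 / 11) + 1 / cfBound l (15 / 11) (41 / 15) := by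
  have hpos : ∀ n, 0 < α n := fun n => by have := hα n; omega
  have h1 := cfBound_le_natCf (x := 15 / 11) (y := 41 / 15) (fun n => hpos _) hr (by norm_num)
    (natCf_mem_Icc fun n => hα _).1 (natCf_mem_Icc fun n => hα _).2
  have h2 := cfBound_le_natCf (x := 15 / 11) (y := 41 / 15) (fun n => hpos _) hl (by norm_num)
    (natCf_mem_Icc fun n => hα _).1 (natCf_mem_Icc fun n => hα _).2
  have h3 := cfBound_pos l (x := 15 / 11) (y := 41 / 15) (by norm_num) (by norm_num)
  have h4 := one_div_le_one_div_of_le h3 h2.1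
  have h5 := one_div_le_one_div_of_le (by linarith) h2.2
  rw [lambdaVal_eq hpos]
  constructor <;> linarith

end lambdaVal

/-! ### The sequence realising the lower endpoint -/

/-- The periodic sequence with period `2, 1, 1, 2, 1, 1, 2, 1`. -/
def lowerSeq (n : ℤ) : ℕ := if n % 8 = 0 ∨ n % 8 = 3 ∨ n % 8 = 6 then 2 else 1

lemma lowerSeq_digit (n : ℤ) : lowerSeq n = 1 ∨ lowerSeq n = 2 := by
  unfold lowerSeq
  split_ifs <;> simp

lemma lowerSeq_pos (n : ℤ) : 0 < lowerSeq n := by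
  have := lowerSeq_digit n
  omega

/-- The purely periodic continued fraction `[2; 1, 1, 2, 1, 1, 2, 1, 2, ...]`. -/
noncomputable def lowerCf : ℝ := natCf (fun n => lowerSeq n)

lemma lowerCf_pos : 0 < lowerCf := by
  have := one_le_natCf (f := fun n => lowerSeq n) (fun n => lowerSeq_pos n)
  unfold lowerCf
  linarith

lemma lowerCf_quadratic : 43 * lowerCf ^ 2 - 80 * lowerCf - 80 = 0 := by
  have h := natCf_eq_cfBound (l := [2, 1, 1, 2, 1, 1, 2, 1]) (f := fun n => lowerSeq n)
    (fun n => lowerSeq_pos n) (by simp [StartsWith, lowerSeq])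
  have e : (fun n : ℕ => lowerSeq ((n + [2, 1, 1, 2, 1, 1, 2, 1].length : ℕ) : ℤ)) =
      fun n : ℕ => lowerSeq n := by
    funext n
    simp [lowerSeq]
  rw [e] at h
  change lowerCf = cfBound _ lowerCf lowerCf at h
  have hp := lowerCf_pos
  simp only [cfBound] at h
  field_simp at h
  ring_nf at h ⊢
  nlinarith

lemma lower_endpoint_eq :
    24 * Real.sqrt 35 / 43 = lowerCf + 1 / (1 + 1 / lowerCf) := by
  have h := lowerCf_quadratic
  have hp := lowerCf_pos
  have hs : Real.sqrt 35 ^ 2 = 35 := Real.sq_sqrt (by norm_num)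
  have hs0 := Real.sqrt_nonneg 35
  have e : lowerCf = (40 + 12 * Real.sqrt 35) / 43 := by
    have : (43 * lowerCf - 40 - 12 * Real.sqrt 35) * (43 * lowerCf - 40 + 12 * Real.sqrt 35) = 0 := by
      linear_combination 43 * h - 144 * hs
    rcases mul_eq_zero.1 this with hz | hz
    · linarith
    · exfalso
      nlinarith
  have hlower : 24 * Real.sqrt 35 / 43 = 2 * lowerCf - 80 / 43 := by rw [e]; ring
  rw [hlower]
  field_simp
  linear_combination h

/-- The right tail of a sequence centred at a maximal position is at most `lowerCf`. -/
lemma natCf_le_lowerCf {f : ℕ → ℕ} (hf : ∀ n, f n = 1 ∨ f n = 2)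
    (h21212 : ∀ n, ¬ StartsWith [2, 1, 2, 1, 2] (fun i => f (n + i)))
    (h212111 : ∀ n, ¬ StartsWith [2, 1, 2, 1, 1, 1] (fun i => f (n + i)))
    (hlong : ∀ n, ¬ StartsWith [1, 1, 2, 1, 1, 2, 1, 2, 1, 1, 2, 2] (fun i => f (n + i)))
    (hstart : StartsWith [2, 1, 1, 2, 1, 1] f) : natCf f ≤ lowerCf := by
  have hpos : ∀ n, 0 < f n := fun n => by have := hf n; omega
  by_cases hne : ∃ n, f n ≠ lowerSeq n
  · classical
    set n := Nat.find hne
    have hdiff : f n ≠ lowerSeq n := Nat.find_spec hne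
    have hsame : ∀ i < n, f i = lowerSeq i := fun i hi => not_not.1 (Nat.find_min hne hi)
    clear_value n
    simp only [StartsWith, zero_add, and_true] at hstart h21212 h212111 hlong
    have hn6 : 6 ≤ n := by
      by_contra hlt
      obtain ⟨h0, h1, h2, h3, h4, h5⟩ := hstart
      interval_cases n <;> exact hdiff (by simp [lowerSeq, h0, h1, h2, h3, h4, h5])
    have hfn := hf n
    have hln := lowerSeq_digit n
    have hval : ∀ i < n, f i = if i % 8 = 0 ∨ i % 8 = 3 ∨ i % 8 = 6 then 2 else 1 := by
      intro i hi
      rw [hsame i hi]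
      unfold lowerSeq
      split_ifs <;> omega
    have hvaln : lowerSeq n = if n % 8 = 0 ∨ n % 8 = 3 ∨ n % 8 = 6 then 2 else 1 := by
      unfold lowerSeq
      split_ifs <;> omega
    refine (natCf_lt_natCf hpos (fun n => lowerSeq_pos n) n hsame (fun h2 => ?_)
      (fun h2 => ?_)).le
    · by_contra hlt
      have hn24 : n % 8 = 2 ∨ n % 8 = 4 := by
        split_ifs at hvaln <;> omega
      have hfn2 : f n = 2 := by split_ifs at hvaln <;> omega
      rcases hn24 with h8 | h8
      · obtain ⟨m, rfl⟩ := Nat.exists_eq_add_of_le' (by omega : 4 ≤ n)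
        refine h21212 m ⟨?_, ?_, ?_, ?_, hfn2⟩ <;>
          rw [hval _ (by omega)] <;> split_ifs <;> omega
      · obtain ⟨m, rfl⟩ := Nat.exists_eq_add_of_le' (by omega : 11 ≤ n)
        refine hlong m ⟨?_, ?_, ?_, ?_, ?_, ?_, ?_, ?_, ?_, ?_, ?_, hfn2⟩ <;>
          rw [hval _ (by omega)] <;> split_ifs <;> omega
    · by_contra hlt
      have h8 : n % 8 = 3 := by
        split_ifs at hvaln <;> omega
      have hfn1 : f n = 1 := by split_ifs at hvaln <;> omega
      obtain ⟨m, rfl⟩ := Nat.exists_eq_add_of_le' (by omega : 5 ≤ n)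
      refine h212111 m ⟨?_, ?_, ?_, ?_, ?_, hfn1⟩ <;>
        rw [hval _ (by omega)] <;> split_ifs <;> omega
  · push Not at hne
    rw [lowerCf, ← funext hne]

/-! ### The sequence realising the upper endpoint -/

/-- The palindromic sequence whose right half, from the position `0`, is
`2, 1, 1, 2, 2, 2` followed by the period `1, 2, 1, 1, 2, 2`. -/
def upperSeq (n : ℤ) : ℕ :=
  if n = 0 ∨ n = -7 ∨ n = 3 ∨ n = -10 ∨ n = -2 ∨ n = -5 ∨
    (2 ≤ n ∧ (n % 6 = 1 ∨ n % 6 = 4 ∨ n % 6 = 5)) ∨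
    (n ≤ -9 ∧ ((-7 - n) % 6 = 1 ∨ (-7 - n) % 6 = 4 ∨ (-7 - n) % 6 = 5)) then 2 else 1

lemma upperSeq_digit (n : ℤ) : upperSeq n = 1 ∨ upperSeq n = 2 := by
  unfold upperSeq
  split_ifs <;> simp

lemma upperSeq_pos (n : ℤ) : 0 < upperSeq n := by
  have := upperSeq_digit n
  omega

lemma upperSeq_symm (n : ℤ) : upperSeq (-7 - n) = upperSeq n := by
  unfold upperSeq
  split_ifs <;> omega

/-- The continued fraction of the right half of `upperSeq`. -/
noncomputable def upperCf : ℝ := natCf (fun n => upperSeq n)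

lemma one_lt_upperCf : 1 < upperCf := one_lt_natCf (fun n => upperSeq_pos n)

lemma upper_tail_eq :
    natCf (fun n => upperSeq (n + 6)) = (15 + 3 * Real.sqrt 87) / 31 := by
  set Q := natCf (fun n => upperSeq (n + 6)) with hQ
  have h := natCf_eq_cfBound (l := [1, 2, 1, 1, 2, 2]) (f := fun n => upperSeq (n + 6))
    (fun n => upperSeq_pos _) (by simp [StartsWith, upperSeq])
  have e : (fun n : ℕ => upperSeq ((n + [1, 2, 1, 1, 2, 2].length : ℕ) + 6 : ℤ)) =
      fun n : ℕ => upperSeq (n + 6) := by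
    funext n
    simp only [upperSeq, List.length_cons, List.length_nil]
    push_cast
    split_ifs <;> omega
  rw [e, ← hQ] at h
  have hp : 1 < Q := one_lt_natCf (fun n => upperSeq_pos _)
  have hp0 : 0 < Q := by linarith
  have hquad : 31 * Q ^ 2 - 30 * Q - 18 = 0 := by
    clear_value Q
    simp only [cfBound] at h
    field_simp at h
    ring_nf at h ⊢
    nlinarith
  have hs : Real.sqrt 87 ^ 2 = 87 := Real.sq_sqrt (by norm_num)
  have hs0 := Real.sqrt_nonneg 87
  have : (31 * Q - 15 - 3 * Real.sqrt 87) * (31 * Q - 15 + 3 * Real.sqrt 87) = 0 := by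
    linear_combination 31 * hquad - 9 * hs
  rcases mul_eq_zero.1 this with h' | h'
  · linarith
  · exfalso
    linarith

lemma add_one_div_eq {d x y : ℝ} (h : x * (y - d) = 1) : d + 1 / x = y := by
  rw [one_div, inv_eq_of_mul_eq_one_right h]
  ring

lemma upperCf_eq : upperCf = (211 - Real.sqrt 87) / 78 := by
  have h := natCf_eq_cfBound (l := [2, 1, 1, 2, 2, 2]) (f := fun n => upperSeq n)
    (fun n => upperSeq_pos _) (by simp [StartsWith, upperSeq])
  simp only [List.length_cons, List.length_nil, zero_add, Nat.reduceAdd, Nat.cast_add,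
    Nat.cast_ofNat] at h
  rw [upper_tail_eq] at h
  have hs : Real.sqrt 87 ^ 2 = 87 := Real.sq_sqrt (by norm_num)
  rw [upperCf, h]
  generalize Real.sqrt 87 = s at *
  simp only [cfBound]
  push_cast
  rw [add_one_div_eq (d := 2) (x := (15 + 3 * s) / 31) (y := (7 + s) / 6)
      (by linear_combination hs / 62),
    add_one_div_eq (d := 2) (x := (7 + s) / 6) (y := (17 + 3 * s) / 19)
      (by linear_combination hs / 38),
    add_one_div_eq (d := 2) (x := (17 + 3 * s) / 19) (y := (35 + 3 * s) / 26)
      (by linear_combination 9 * hs / 494),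
    add_one_div_eq (d := 1) (x := (35 + 3 * s) / 26) (y := (52 - 3 * s) / 17)
      (by linear_combination -9 * hs / 442),
    add_one_div_eq (d := 1) (x := (52 - 3 * s) / 17) (y := (165 + 3 * s) / 113)
      (by linear_combination -9 * hs / 1921),
    add_one_div_eq (d := 2) (x := (165 + 3 * s) / 113) (y := (211 - s) / 78)
      (by linear_combination -3 * hs / 8814)]

lemma upper_endpoint_eq : (457878845 - 1713407 * Real.sqrt 87) / 133663998 =
    upperCf + 1 / cfBound [1, 2, 1, 1, 2, 1] upperCf upperCf := by
  have hs : Real.sqrt 87 ^ 2 = 87 := Real.sq_sqrt (by norm_num)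
  rw [upperCf_eq]
  generalize Real.sqrt 87 = s at *
  simp only [cfBound]
  push_cast
  symm
  rw [add_one_div_eq (d := 1) (x := (211 - s) / 78) (y := (2342 + 3 * s) / 1709)
      (by linear_combination -3 * hs / 133302),
    add_one_div_eq (d := 2) (x := (2342 + 3 * s) / 1709) (y := (8760 - 3 * s) / 3209)
      (by linear_combination -9 * hs / 5484181),
    add_one_div_eq (d := 1) (x := (8760 - 3 * s) / 3209) (y := (10891 + s) / 7971)
      (by linear_combination -3 * hs / 25578939),
    add_one_div_eq (d := 1) (x := (10891 + s) / 7971) (y := (77315 - 3 * s) / 44642)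
      (by linear_combination -3 * hs / 355841382),
    add_one_div_eq (d := 2) (x := (77315 - 3 * s) / 44642) (y := (345117 + 3 * s) / 133901)
      (by linear_combination -9 * hs / 5977608442),
    add_one_div_eq (d := 1) (x := (345117 + 3 * s) / 133901) (y := (411541 - s) / 296502)
      (by linear_combination -3 * hs / 39701914302)]
  apply add_one_div_eq
  linear_combination -234 * hs / (296502 * 133663998)

/-- A tail beginning with `2, 1, 1, 2, 2, 2` is at least `upperCf`. -/
lemma upperCf_le_natCf {f : ℕ → ℕ} (hf : ∀ n, f n = 1 ∨ f n = 2)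
    (h21212 : ∀ n, ¬ StartsWith [2, 1, 2, 1, 2] (fun i => f (n + i)))
    (h212111 : ∀ n, ¬ StartsWith [2, 1, 2, 1, 1, 1] (fun i => f (n + i)))
    (hstart : StartsWith [2, 1, 1, 2, 2, 2] f) : upperCf ≤ natCf f := by
  have hpos : ∀ n, 0 < f n := fun n => by have := hf n; omega
  by_cases hne : ∃ n, f n ≠ upperSeq n
  · classical
    set n := Nat.find hne
    have hdiff : f n ≠ upperSeq n := Nat.find_spec hne
    have hsame : ∀ i < n, f i = upperSeq i := fun i hi => not_not.1 (Nat.find_min hne hi)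
    clear_value n
    simp only [StartsWith, zero_add, and_true] at hstart h21212 h212111
    have hn6 : 6 ≤ n := by
      by_contra hlt
      obtain ⟨h0, h1, h2, h3, h4, h5⟩ := hstart
      interval_cases n <;> exact hdiff (by simp [upperSeq, h0, h1, h2, h3, h4, h5])
    have hfn := hf n
    have hval' : ∀ i : ℕ, 5 ≤ i →
        upperSeq i = if i % 6 = 1 ∨ i % 6 = 4 ∨ i % 6 = 5 then 2 else 1 := by
      intro i hi
      refine if_congr ?_ rfl rfl
      omega
    have hval : ∀ i < n, 5 ≤ i →
        f i = if i % 6 = 1 ∨ i % 6 = 4 ∨ i % 6 = 5 then 2 else 1 :=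
      fun i hi h5 => (hsame i hi).trans (hval' i h5)
    have hvaln := hval' n (by omega)
    refine (natCf_lt_natCf (fun n => upperSeq_pos n) hpos n (fun i hi => (hsame i hi).symm)
      (fun h2 => ?_) (fun h2 => ?_)).le
    · by_contra hlt
      have h6 : n % 6 = 4 := by
        split_ifs at hvaln <;> omega
      have hfn1 : f n = 1 := by split_ifs at hvaln <;> omega
      obtain ⟨m, rfl⟩ := Nat.exists_eq_add_of_le' (by omega : 5 ≤ n)
      refine h212111 m ⟨?_, ?_, ?_, ?_, ?_, hfn1⟩ <;>
        rw [hval _ (by omega) (by omega)] <;> split_ifs <;> omega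
    · by_contra hlt
      have h6 : n % 6 = 3 := by
        split_ifs at hvaln <;> omega
      have hfn2 : f n = 2 := by split_ifs at hvaln <;> omega
      obtain ⟨m, rfl⟩ := Nat.exists_eq_add_of_le' (by omega : 4 ≤ n)
      refine h21212 m ⟨?_, ?_, ?_, ?_, hfn2⟩ <;>
        rw [hval _ (by omega) (by omega)] <;> split_ifs <;> omega
  · push Not at hne
    rw [upperCf, ← funext hne]

/-! ### Sequences below the upper endpoint -/

lemma upper_endpoint_lt :
    (457878845 - 1713407 * Real.sqrt 87) / 133663998 < 33060305 / 10000000 := by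
  have h : 9327378 / 1000000 < Real.sqrt 87 := Real.lt_sqrt_of_sq_lt (by norm_num)
  rw [div_lt_iff₀ (by norm_num)]
  linarith

lemma lt_lower_endpoint : 33019 / 10000 < 24 * Real.sqrt 35 / 43 := by
  have h : 5916 / 1000 < Real.sqrt 35 := Real.lt_sqrt_of_sq_lt (by norm_num)
  linarith

lemma lower_endpoint_lt_upper_endpoint :
    24 * Real.sqrt 35 / 43 < (457878845 - 1713407 * Real.sqrt 87) / 133663998 := by
  have h : Real.sqrt 35 < 5917 / 1000 := (Real.sqrt_lt' (by norm_num)).2 (by norm_num)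
  have h' : Real.sqrt 87 < 9328 / 1000 := (Real.sqrt_lt' (by norm_num)).2 (by norm_num)
  rw [lt_div_iff₀ (by norm_num)]
  linarith

lemma add_one_div_cfBound_le {R a b : ℝ} (hR : 1 < R) (hRb : R ≤ b) (hba : b ≤ a) :
    R + 1 / cfBound [1, 2, 1, 1, 2, 1] R R ≤ a + 1 / cfBound [1, 2, 1, 1, 2, 1] b b := by
  have key (x : ℝ) (hx : 1 < x) :
      1 / cfBound [1, 2, 1, 1, 2, 1] x x = (18 * x + 13) / (25 * x + 18) := by
    simp only [cfBound]
    push_cast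
    field_simp
    ring
  rw [key R hR, key b (by linarith)]
  have e : (18 * R + 13) / (25 * R + 18) - (18 * b + 13) / (25 * b + 18) =
      (b - R) / ((25 * R + 18) * (25 * b + 18)) := by
    have : 25 * R + 18 ≠ 0 := by linarith
    have : 25 * b + 18 ≠ 0 := by linarith
    field_simp
    ring
  have h2 : (b - R) / ((25 * R + 18) * (25 * b + 18)) ≤ b - R := by
    apply div_le_self (by linarith)
    nlinarith
  linarith

/-- A sequence of ones and twos all of whose values `λ_k` lie below the upper endpoint. -/
structure IsAdmissible (α : ℤ → ℕ) : Prop where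
  digit : ∀ n, α n = 1 ∨ α n = 2
  lt : ∀ k, lambdaVal α k < (457878845 - 1713407 * Real.sqrt 87) / 133663998

lemma isAdmissible_of_lt {α : ℤ → ℕ} (hα : ∀ n, 0 < α n)
    (hlt : ∀ k, lambdaVal α k < (457878845 - 1713407 * Real.sqrt 87) / 133663998) :
    IsAdmissible α := by
  have hU := upper_endpoint_lt
  have h3 : ∀ n, α n ≤ 3 := by
    intro n
    by_contra! h
    have h4 : (4 : ℝ) ≤ α n := by exact_mod_cast h
    have h1 := lt_natCf (f := fun i => α (n + i)) (fun i => hα _)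
    have h2 := one_le_natCf (f := fun i => α (n - 1 - i)) (fun i => hα _)
    have h5 : 0 < 1 / natCf (fun i => α (n - 1 - i)) := by positivity
    have h6 := hlt n
    rw [lambdaVal_eq hα] at h6
    simp only [Nat.cast_zero, add_zero] at h1
    linarith
  refine ⟨fun n => ?_, hlt⟩
  have hpos := hα n
  have hle := h3 n
  by_contra hne
  have hn : α n = 3 := by omega
  have bound (f : ℕ → ℕ) (hf : ∀ i, 0 < f i) (hf3 : f 0 ≤ 3) : 1 / 4 ≤ 1 / natCf f := by
    have h1 := one_le_natCf hf
    have h2 := natCf_lt hf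
    have h3 : (f 0 : ℝ) ≤ 3 := by exact_mod_cast hf3
    exact one_div_le_one_div_of_le (by linarith) (by linarith)
  have h1 := bound (fun i => α (n - 1 - i)) (fun i => hα _) (h3 _)
  have h2 := bound (fun i => α (n + (i + 1 : ℕ))) (fun i => hα _) (h3 _)
  have h6 := hlt n
  rw [lambdaVal_eq hα, natCf_succ (f := fun i => α (n + i)) (fun i => hα _)] at h6
  simp only [Nat.cast_zero, add_zero, hn] at h6
  push_cast at h2 h6
  linarith

namespace IsAdmissible

variable {α : ℤ → ℕ}

lemma pos (h : IsAdmissible α) (n : ℤ) : 0 < α n := by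
  have := h.digit n
  omega

lemma shift (h : IsAdmissible α) (c : ℤ) : IsAdmissible (fun n => α (n + c)) :=
  ⟨fun n => h.digit _, fun k => by rw [lambdaVal_shift]; exact h.lt _⟩

lemma neg (h : IsAdmissible α) : IsAdmissible (fun n => α (-n)) :=
  ⟨fun n => h.digit _, fun k => by rw [lambdaVal_neg h.pos]; exact h.lt _⟩

/-- A word around a position that forces a value beyond the upper endpoint cannot occur. -/
lemma not_large (h : IsAdmissible α) (k : ℤ) (l r : List ℕ)
    (hnum : 33060305 / 10000000 ≤
      cfBound r (15 / 11) (41 / 15) + 1 / cfBound l (41 / 15) (15 / 11))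
    (hr : StartsWith r (fun n => α (k + n))) (hl : StartsWith l (fun n => α (k - 1 - n))) :
    False := by
  have h1 := (cfBound_le_lambdaVal h.digit k hr hl).1
  linarith [h.lt k, upper_endpoint_lt]

/-- A word around a position that forces a value below the lower endpoint. -/
lemma not_small (h : IsAdmissible α) (k : ℤ) (hk : 24 * Real.sqrt 35 / 43 < lambdaVal α k) (l r : List ℕ)
    (hnum : cfBound r (41 / 15) (15 / 11) + 1 / cfBound l (15 / 11) (41 / 15) ≤ 33019 / 10000)
    (hr : StartsWith r (fun n => α (k + n))) (hl : StartsWith l (fun n => α (k - 1 - n))) :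
    False := by
  have h1 := (cfBound_le_lambdaVal h.digit k hr hl).2
  linarith [lt_lower_endpoint]

lemma not_21212 (h : IsAdmissible α) (k : ℤ) : ¬ StartsWith [2, 1, 2, 1, 2] (fun n => α (k + n)) := by
  intro hw
  refine h.not_large (k + 2) [1, 2] [2, 1, 2] (by norm_num [cfBound]) ?_ ?_ <;>
    simp [StartsWith] at hw ⊢ <;> ring_nf at hw ⊢ <;> simp [hw]

lemma not_212111 (h : IsAdmissible α) (k : ℤ) : ¬ StartsWith [2, 1, 2, 1, 1, 1] (fun n => α (k + n)) := by
  intro hw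
  refine h.not_large (k + 2) [1, 2] [2, 1, 1, 1] (by norm_num [cfBound]) ?_ ?_ <;>
    simp [StartsWith] at hw ⊢ <;> ring_nf at hw ⊢ <;> simp [hw]

lemma not_112112121122 (h : IsAdmissible α) (k : ℤ) :
    ¬ StartsWith [1, 1, 2, 1, 1, 2, 1, 2, 1, 1, 2, 2] (fun n => α (k + n)) := by
  intro hw
  refine h.not_large (k + 7) [1, 2, 1, 1, 2, 1, 1] [2, 1, 1, 2, 2] (by norm_num [cfBound]) ?_ ?_ <;>
    simp [StartsWith] at hw ⊢ <;> ring_nf at hw ⊢ <;> simp [hw]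

lemma right_le_lowerCf (h : IsAdmissible α) (k : ℤ) (hk : StartsWith [2, 1, 1, 2, 1, 1] (fun n => α (k + n))) :
    natCf (fun n => α (k + n)) ≤ lowerCf := by
  refine natCf_le_lowerCf (fun n => h.digit _) (fun n => ?_) (fun n => ?_) (fun n => ?_) hk
  · simpa [add_assoc] using h.not_21212 (k + n)
  · simpa [add_assoc] using h.not_212111 (k + n)
  · simpa [add_assoc] using h.not_112112121122 (k + n)

lemma left_le_lowerCf (h : IsAdmissible α) (k : ℤ) (hk : StartsWith [2, 1, 1, 2, 1, 1] (fun n => α (k - n))) :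
    natCf (fun n => α (k - n)) ≤ lowerCf := by
  have e : (fun n : ℕ => α (k - n)) = fun n : ℕ => α (-(-k + n)) := by
    funext n
    congr 1
    ring
  rw [e] at hk ⊢
  exact h.neg.right_le_lowerCf (-k) hk

lemma upperCf_le_right (h : IsAdmissible α) (k : ℤ) (hk : StartsWith [2, 1, 1, 2, 2, 2] (fun n => α (k + n))) :
    upperCf ≤ natCf (fun n => α (k + n)) := by
  refine upperCf_le_natCf (fun n => h.digit _) (fun n => ?_) (fun n => ?_) hk
  · simpa [add_assoc] using h.not_21212 (k + n)
  · simpa [add_assoc] using h.not_212111 (k + n)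

lemma upperCf_le_left (h : IsAdmissible α) (k : ℤ) (hk : StartsWith [2, 1, 1, 2, 2, 2] (fun n => α (k - n))) :
    upperCf ≤ natCf (fun n => α (k - n)) := by
  have e : (fun n : ℕ => α (k - n)) = fun n : ℕ => α (-(-k + n)) := by
    funext n
    congr 1
    ring
  rw [e] at hk ⊢
  exact h.neg.upperCf_le_right (-k) hk

/-- Sequences that look like `lowerSeq` around `0` have `λ_0` at most the lower endpoint. -/
lemma lambdaVal_le_lower (h : IsAdmissible α) (hr : StartsWith [2, 1, 1, 2, 1, 1] (fun n => α (0 + n)))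
    (h1 : α (-1) = 1) (hl : StartsWith [2, 1, 1, 2, 1, 1] (fun n => α (-2 - n))) :
    lambdaVal α 0 ≤ 24 * Real.sqrt 35 / 43 := by
  have hp := lowerCf_pos
  have ha := h.right_le_lowerCf 0 hr
  have hb := h.left_le_lowerCf (-2) hl
  have hb1 := one_le_natCf (f := fun n => α (-2 - n)) (fun n => h.pos _)
  rw [lambdaVal_eq h.pos, lower_endpoint_eq,
    natCf_succ (f := fun n => α (0 - 1 - n)) (fun n => h.pos _)]
  have e : (fun n : ℕ => α (0 - 1 - (n + 1 : ℕ))) = fun n : ℕ => α (-2 - n) := by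
    funext n
    congr 1
    push_cast
    ring
  rw [e]
  simp only [Nat.cast_zero, sub_zero, zero_sub, h1, Nat.cast_one]
  gcongr

/-- Admissible sequences do not look like `upperSeq` around `0`. -/
lemma not_upper (h : IsAdmissible α) (hr : StartsWith [2, 1, 1, 2, 2, 2] (fun n => α (0 + n)))
    (hm : StartsWith [1, 2, 1, 1, 2, 1] (fun n => α (-6 + n)))
    (hl : StartsWith [2, 1, 1, 2, 2, 2] (fun n => α (-7 - n))) : False := by
  have ha := h.upperCf_le_right 0 hr
  have hb := h.upperCf_le_left (-7) hl
  have hR := one_lt_upperCf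
  have h0 := h.lt 0
  have h7 := h.lt (-7)
  have hm' : StartsWith [1, 2, 1, 1, 2, 1] (fun n => α (0 - 1 - n)) := by
    simp [StartsWith] at hm ⊢
    simp [hm]
  rw [upper_endpoint_eq, lambdaVal_eq h.pos, natCf_eq_cfBound (fun n => h.pos _) hm'] at h0
  rw [upper_endpoint_eq, lambdaVal_eq' h.pos, natCf_eq_cfBound
    (f := fun n => α (-7 + 1 + n)) (fun n => h.pos _) hm] at h7
  have e1 : (fun n : ℕ => α (0 - 1 - ((n + [1, 2, 1, 1, 2, 1].length : ℕ) : ℤ))) =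
      fun n : ℕ => α (-7 - n) := by
    funext n
    congr 1
    simp
    ring
  have e2 : (fun n : ℕ => α (-7 + 1 + ((n + [1, 2, 1, 1, 2, 1].length : ℕ) : ℤ))) =
      fun n : ℕ => α (0 + n) := by
    funext n
    congr 1
    simp
  rw [e1] at h0
  rw [e2] at h7
  rcases le_total (natCf fun n => α (-7 - n)) (natCf fun n => α (0 + n)) with hle | hle
  · linarith [add_one_div_cfBound_le hR hb hle]
  · linarith [add_one_div_cfBound_le hR ha hle]

end IsAdmissible

namespace IsAdmissible

variable {α : ℤ → ℕ}

/-- The case `λ_0 > 24 √35 / 43` with central word `2 1 [2] 1 1` is impossible. -/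
lemma not_lower_lt_of_center (h : IsAdmissible α)
    (hL : 24 * Real.sqrt 35 / 43 < lambdaVal α 0) (hm2 : α (-2) = 2) (hm1 : α (-1) = 1)
    (h0 : α 0 = 2) (h1 : α 1 = 1) (h2 : α 2 = 1) : False := by
  rcases h.digit 3 with h3 | h3
  · exact h.not_large 0 [1, 2] [2, 1, 1, 1] (by norm_num [cfBound])
      (by simp [StartsWith, *]) (by simp [StartsWith, *])
  rcases h.digit (-3) with hm3 | hm3
  swap
  · exact h.not_small 0 hL [1, 2, 2] [2, 1, 1, 2] (by norm_num [cfBound])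
      (by simp [StartsWith, *]) (by simp [StartsWith, *])
  rcases h.digit (-4) with hm4 | hm4
  swap
  · exact h.not_large (-2) [1, 2] [2, 1, 2] (by norm_num [cfBound])
      (by simp [StartsWith, *]) (by simp [StartsWith, *])
  rcases h.digit (-5) with hm5 | hm5
  · exact h.not_large (-2) [1, 1, 1] [2, 1, 2] (by norm_num [cfBound])
      (by simp [StartsWith, *]) (by simp [StartsWith, *])
  rcases h.digit 4 with h4 | h4
  · rcases h.digit 5 with h5 | h5
    swap
    · exact h.not_small 0 hL [1, 2, 1, 1, 2] [2, 1, 1, 2, 1, 2] (by norm_num [cfBound])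
        (by simp [StartsWith, *]) (by simp [StartsWith, *])
    rcases h.digit (-6) with hm6 | hm6
    swap
    · exact h.not_large (-2) [1, 1, 2, 2] [2, 1, 2, 1, 1, 2, 1, 1] (by norm_num [cfBound])
        (by simp [StartsWith, *]) (by simp [StartsWith, *])
    rcases h.digit (-7) with hm7 | hm7
    swap
    · exact h.not_small 0 hL [1, 2, 1, 1, 2, 1, 2] [2, 1, 1, 2, 1] (by norm_num [cfBound])
        (by simp [StartsWith, *]) (by simp [StartsWith, *])
    exact hL.not_ge (h.lambdaVal_le_lower (by simp [StartsWith, *]) hm1 (by simp [StartsWith, *]))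
  rcases h.digit 5 with h5 | h5
  · exact h.not_large 0 [1, 2, 1] [2, 1, 1, 2, 2, 1] (by norm_num [cfBound])
      (by simp [StartsWith, *]) (by simp [StartsWith, *])
  rcases h.digit 6 with h6 | h6
  swap
  · exact h.not_large 0 [1, 2, 1] [2, 1, 1, 2, 2, 2, 2] (by norm_num [cfBound])
      (by simp [StartsWith, *]) (by simp [StartsWith, *])
  rcases h.digit 7 with h7 | h7
  · exact h.not_large 0 [1, 2, 1] [2, 1, 1, 2, 2, 2, 1, 1] (by norm_num [cfBound])
      (by simp [StartsWith, *]) (by simp [StartsWith, *])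
  rcases h.digit (-6) with hm6 | hm6
  swap
  · exact h.not_large (-2) [1, 1, 2, 2] [2, 1, 2, 1, 1, 2, 2] (by norm_num [cfBound])
      (by simp [StartsWith, *]) (by simp [StartsWith, *])
  rcases h.digit (-7) with hm7 | hm7
  · exact h.not_large 0 [1, 2, 1, 1, 2, 1, 1] [2, 1, 1, 2, 2] (by norm_num [cfBound])
      (by simp [StartsWith, *]) (by simp [StartsWith, *])
  rcases h.digit (-8) with hm8 | hm8
  swap
  · exact h.not_large 0 [1, 2, 1, 1, 2, 1, 2, 2] [2, 1, 1, 2, 2] (by norm_num [cfBound])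
      (by simp [StartsWith, *]) (by simp [StartsWith, *])
  rcases h.digit (-9) with hm9 | hm9
  swap
  · exact h.not_large (-7) [1, 2] [2, 1, 2] (by norm_num [cfBound])
      (by simp [StartsWith, *]) (by simp [StartsWith, *])
  rcases h.digit 8 with h8 | h8
  swap
  · exact h.not_large 0 [1, 2, 1, 1, 2, 1, 2, 1, 1] [2, 1, 1, 2, 2, 2, 1, 2, 2]
      (by norm_num [cfBound]) (by simp [StartsWith, *]) (by simp [StartsWith, *])
  rcases h.digit 9 with h9 | h9
  swap
  · exact h.not_large 7 [1, 2] [2, 1, 2] (by norm_num [cfBound])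
      (by simp [StartsWith, *]) (by simp [StartsWith, *])
  rcases h.digit (-10) with hm10 | hm10
  · exact h.not_large (-7) [1, 1, 1] [2, 1, 2] (by norm_num [cfBound])
      (by simp [StartsWith, *]) (by simp [StartsWith, *])
  rcases h.digit (-11) with hm11 | hm11
  · rcases h.digit 10 with h10 | h10
    · exact h.not_large 7 [1, 2] [2, 1, 1, 1] (by norm_num [cfBound])
        (by simp [StartsWith, *]) (by simp [StartsWith, *])
    · exact h.not_large 0 [1, 2, 1, 1, 2, 1, 2, 1, 1, 2, 1] [2, 1, 1, 2, 2, 2, 1, 2, 1, 1, 2]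
        (by norm_num [cfBound]) (by simp [StartsWith, *]) (by simp [StartsWith, *])
  rcases h.digit (-12) with hm12 | hm12
  · exact h.not_large (-7) [1, 1, 2, 2, 1] [2, 1, 2, 1] (by norm_num [cfBound])
      (by simp [StartsWith, *]) (by simp [StartsWith, *])
  exact h.not_upper (by simp [StartsWith, *]) (by simp [StartsWith, *]) (by simp [StartsWith, *])

lemma lambdaVal_zero_le_lower (h : IsAdmissible α) : lambdaVal α 0 ≤ 24 * Real.sqrt 35 / 43 := by
  by_contra! hL
  rcases h.digit 0 with h0 | h0
  · exact h.not_small 0 hL [] [1] (by norm_num [cfBound])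
      (by simp [StartsWith, *]) (by simp [StartsWith, *])
  rcases h.digit 1 with h1 | h1
  swap
  · exact h.not_small 0 hL [] [2, 2] (by norm_num [cfBound])
      (by simp [StartsWith, *]) (by simp [StartsWith, *])
  rcases h.digit (-1) with hm1 | hm1
  swap
  · exact h.not_small 0 hL [2] [2] (by norm_num [cfBound])
      (by simp [StartsWith, *]) (by simp [StartsWith, *])
  rcases h.digit 2 with h2 | h2 <;> rcases h.digit (-2) with hm2 | hm2
  · exact h.not_small 0 hL [1, 1] [2, 1, 1] (by norm_num [cfBound])
      (by simp [StartsWith, *]) (by simp [StartsWith, *])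
  · exact h.not_lower_lt_of_center hL hm2 hm1 h0 h1 h2
  · exact h.neg.not_lower_lt_of_center (by rwa [lambdaVal_neg h.pos]) (by simpa) (by simpa)
      (by simpa) hm1 hm2
  · exact h.not_large 0 [1, 2] [2, 1, 2] (by norm_num [cfBound])
      (by simp [StartsWith, *]) (by simp [StartsWith, *])

/-- There are no values `λ_k` of an admissible sequence between the endpoints. -/
lemma lambdaVal_le (h : IsAdmissible α) (k : ℤ) : lambdaVal α k ≤ 24 * Real.sqrt 35 / 43 := by
  have hk := (h.shift k).lambdaVal_zero_le_lower
  rwa [lambdaVal_shift, zero_add] at hk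

end IsAdmissible

/-! ### The endpoints -/

lemma mem_markovSpectrum_of_le {α : ℤ → ℕ} {x : ℝ} (hα : ∀ n, 0 < α n) (k : ℤ)
    (hk : lambdaVal α k = x) (hle : ∀ n, lambdaVal α n ≤ x) : x ∈ markovSpectrum := by
  have hb : BddAbove (range (lambdaVal α)) := ⟨x, by rintro _ ⟨n, rfl⟩; exact hle n⟩
  exact ⟨α, hα, hb, le_antisymm (ciSup_le hle) (hk ▸ le_ciSup hb k)⟩

lemma lowerSeq_congr {m n : ℤ} (hmn : m % 8 = n % 8) : lowerSeq m = lowerSeq n := by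
  simp only [lowerSeq, hmn]

lemma lambdaVal_lowerSeq_of_mod_eq_zero {k : ℤ} (hk : k % 8 = 0) :
    lambdaVal lowerSeq k = 24 * Real.sqrt 35 / 43 := by
  rw [lambdaVal_eq lowerSeq_pos, lower_endpoint_eq,
    natCf_succ (f := fun n => lowerSeq (k - 1 - n)) (fun n => lowerSeq_pos _)]
  have e1 : (fun n : ℕ => lowerSeq (k + n)) = fun n : ℕ => lowerSeq n :=
    funext fun n => lowerSeq_congr (by omega)
  have e2 : (fun n : ℕ => lowerSeq (k - 1 - (n + 1 : ℕ))) = fun n : ℕ => lowerSeq n := by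
    funext n
    unfold lowerSeq
    exact if_congr (by omega) rfl rfl
  have e3 : lowerSeq (k - 1 - (0 : ℕ)) = 1 := if_neg (by omega)
  rw [e1, e2, e3, Nat.cast_one]
  rfl

lemma lambdaVal_lowerSeq_le (k : ℤ) : lambdaVal lowerSeq k ≤ 24 * Real.sqrt 35 / 43 := by
  have hL := lt_lower_endpoint
  have bound (l r : List ℕ)
      (hnum : cfBound r (41 / 15) (15 / 11) + 1 / cfBound l (15 / 11) (41 / 15) ≤ 33019 / 10000)
      (hr : StartsWith r (fun n => lowerSeq (k + n)))
      (hl : StartsWith l (fun n => lowerSeq (k - 1 - n))) :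
      lambdaVal lowerSeq k ≤ 24 * Real.sqrt 35 / 43 := by
    linarith [(cfBound_le_lambdaVal lowerSeq_digit k hr hl).2]
  by_cases h0 : k % 8 = 0
  · exact (lambdaVal_lowerSeq_of_mod_eq_zero h0).le
  by_cases h6 : k % 8 = 6
  · have e : lowerSeq = fun n => lowerSeq (-n + 6) := by
      funext n
      unfold lowerSeq
      exact if_congr (by omega) rfl rfl
    rw [e, lambdaVal_neg (α := fun n => lowerSeq (n + 6)) (fun n => lowerSeq_pos _),
      lambdaVal_shift]
    exact (lambdaVal_lowerSeq_of_mod_eq_zero (by omega)).le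
  by_cases h3 : k % 8 = 3
  · refine bound [1, 1] [2, 1, 1] (by norm_num [cfBound]) ?_ ?_
    · refine ⟨if_pos ?_, if_neg ?_, if_neg ?_, trivial⟩ <;> push_cast <;> omega
    · refine ⟨if_neg ?_, if_neg ?_, trivial⟩ <;> push_cast <;> omega
  · refine bound [] [1] (by norm_num [cfBound]) ⟨if_neg ?_, trivial⟩ trivial
    push_cast
    omega

lemma lambdaVal_upperSeq_zero :
    lambdaVal upperSeq 0 = (457878845 - 1713407 * Real.sqrt 87) / 133663998 := by
  have hm : StartsWith [1, 2, 1, 1, 2, 1] (fun n => upperSeq (0 - 1 - n)) := by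
    simp [StartsWith, upperSeq]
  have e1 : (fun n : ℕ => upperSeq (0 - 1 - ((n + [1, 2, 1, 1, 2, 1].length : ℕ) : ℤ))) =
      fun n : ℕ => upperSeq n := by
    funext n
    rw [← upperSeq_symm]
    congr 1
    simp
    ring
  rw [lambdaVal_eq upperSeq_pos, upper_endpoint_eq, natCf_eq_cfBound (fun n => upperSeq_pos _) hm,
    e1]
  simp only [zero_add]
  rfl

lemma lambdaVal_upperSeq_symm (k : ℤ) : lambdaVal upperSeq (-7 - k) = lambdaVal upperSeq k := by
  have e : upperSeq = fun n => upperSeq (-n + -7) := by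
    funext n
    rw [← upperSeq_symm]
    congr 1
    ring
  conv_rhs => rw [e, lambdaVal_neg (α := fun n => upperSeq (n + -7)) (fun n => upperSeq_pos _),
    lambdaVal_shift]
  congr 1
  ring

lemma lambdaVal_upperSeq_le (k : ℤ) :
    lambdaVal upperSeq k ≤ (457878845 - 1713407 * Real.sqrt 87) / 133663998 := by
  wlog hk : -3 ≤ k generalizing k
  · rw [← lambdaVal_upperSeq_symm]
    exact this _ (by omega)
  have hL := lt_lower_endpoint
  have hLU := lower_endpoint_lt_upper_endpoint
  have bound (l r : List ℕ)
      (hnum : cfBound r (41 / 15) (15 / 11) + 1 / cfBound l (15 / 11) (41 / 15) ≤ 33019 / 10000)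
      (hr : StartsWith r (fun n => upperSeq (k + n)))
      (hl : StartsWith l (fun n => upperSeq (k - 1 - n))) :
      lambdaVal upperSeq k ≤ (457878845 - 1713407 * Real.sqrt 87) / 133663998 := by
    linarith [(cfBound_le_lambdaVal upperSeq_digit k hr hl).2]
  by_cases h0 : k = 0
  · rw [h0, lambdaVal_upperSeq_zero]
  by_cases h2 : k = -2
  · subst h2
    exact bound [1, 1, 2, 1, 2] [2, 1, 2, 1, 1, 2] (by norm_num [cfBound])
      (by simp [StartsWith, upperSeq]) (by simp [StartsWith, upperSeq])
  by_cases h4 : k = 3 ∨ 4 ≤ k ∧ k % 6 = 4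
  · refine bound [] [2, 2] (by norm_num [cfBound]) ⟨if_pos ?_, if_pos ?_, trivial⟩ trivial <;>
      push_cast <;> omega
  by_cases h5 : 5 ≤ k ∧ k % 6 = 5
  · refine bound [2] [2] (by norm_num [cfBound]) ⟨if_pos ?_, trivial⟩ ⟨if_pos ?_, trivial⟩ <;>
      push_cast <;> omega
  by_cases h1 : 7 ≤ k ∧ k % 6 = 1
  · refine bound [1, 2, 2] [2, 1, 1, 2] (by norm_num [cfBound]) ?_ ?_
    · refine ⟨if_pos ?_, if_neg ?_, if_neg ?_, if_pos ?_, trivial⟩ <;> push_cast <;> omega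
    · refine ⟨if_neg ?_, if_pos ?_, if_pos ?_, trivial⟩ <;> push_cast <;> omega
  · refine bound [] [1] (by norm_num [cfBound]) ⟨if_neg ?_, trivial⟩ trivial
    push_cast
    omega

/-- The open interval is a gap of the Markov spectrum: the spectrum misses the
open interval, while both endpoints belong to it. -/
theorem markov_gap_16 :
    markovSpectrum ∩ Ioo (24 * Real.sqrt 35 / 43) ((457878845 - 1713407 * Real.sqrt 87) / 133663998) = ∅ ∧
    (24 * Real.sqrt 35 / 43) ∈ markovSpectrum ∧ ((457878845 - 1713407 * Real.sqrt 87) / 133663998) ∈ markovSpectrum := by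
  refine ⟨?_, mem_markovSpectrum_of_le lowerSeq_pos 0 (lambdaVal_lowerSeq_of_mod_eq_zero rfl)
      lambdaVal_lowerSeq_le,
    mem_markovSpectrum_of_le upperSeq_pos 0 lambdaVal_upperSeq_zero lambdaVal_upperSeq_le⟩
  rw [Set.eq_empty_iff_forall_notMem]
  rintro x ⟨⟨α, hα, hb, rfl⟩, hlow, hup⟩
  have h := isAdmissible_of_lt hα (fun k => (le_ciSup hb k).trans_lt hup)
  exact hlow.not_ge (ciSup_le h.lambdaVal_le)
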